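/- Let n ≥ 1, m ≤ 0, 1 ≥ ρ ≥ δ ≥ 0 with δ < 1, and let a ∈ 𝒮(ℝⁿ) with ‖a‖_{L²(ℝⁿ)} = 1. For every σ ∈ S^m_{ρ,δ}(ℝⁿ) there exists τ ∈ S^{m−(ρ−δ)}_{ρ,δ}(ℝⁿ) such that for all f ∈ 𝒮(ℝⁿ) and x ∈ ℝⁿ, Op^{Wick,a}(σ)f(x) = ∫_{ℝⁿ} e^{2πi x·ξ} ( (σ∗|a|²)(x,ξ) + τ(x,ξ) ) 𝓕f(ξ) dξ, where (σ∗|a|²)(x,ξ) = ∫_{ℝⁿ} |a(z)|² σ(x−z, ξ) dz. That is, Op^{Wick,a}(σ) − Op^{KN}(σ∗|a|²) is a Kohn–Nirenberg operator of order m−(ρ−δ). (Proposition A.2(2), Euclidean analogue of Lemma 3.5(2)/Lemma 5.4(2).) -/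

import Mathlib

open MeasureTheory Complex

noncomputable section

/-- `e^{2πit}`. -/
def expi (t : ℝ) : ℂ := Complex.exp (2 * (Real.pi : ℂ) * Complex.I * (t : ℂ))

/-- Dot product on `ℝⁿ`. -/
def dotp {n : ℕ} (x y : Fin n → ℝ) : ℝ := ∑ i, x i * y i

/-- Euclidean Fourier transform `𝓕f(ξ) = ∫ f(y) e^{-2πi y·ξ} dy`. -/
def FT {n : ℕ} (f : (Fin n → ℝ) → ℂ) (ξ : Fin n → ℝ) : ℂ :=
  ∫ y, f y * expi (-(dotp y ξ))

/-- Bargmann-type transform `B_a[f](x,ξ) = ∫ f(y) a(y-x) e^{-2πi y·ξ} dy`. -/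
def Barg {n : ℕ} (a f : (Fin n → ℝ) → ℂ) (x ξ : Fin n → ℝ) : ℂ :=
  ∫ y, f y * a (y - x) * expi (-(dotp y ξ))

/-- Wick quantization with window `a`. -/
def WickOp {n : ℕ} (a : (Fin n → ℝ) → ℂ) (σ : (Fin n → ℝ) → (Fin n → ℝ) → ℂ)
    (f : (Fin n → ℝ) → ℂ) (y : Fin n → ℝ) : ℂ :=
  ∫ p : (Fin n → ℝ) × (Fin n → ℝ),
    σ p.1 p.2 * Barg a f p.1 p.2 * (starRingEnd ℂ) (a (y - p.1)) * expi (dotp y p.2)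

/-- Kohn–Nirenberg quantization. -/
def OpKN {n : ℕ} (σ : (Fin n → ℝ) → (Fin n → ℝ) → ℂ) (f : (Fin n → ℝ) → ℂ)
    (x : Fin n → ℝ) : ℂ :=
  ∫ ξ, expi (dotp x ξ) * σ x ξ * FT f ξ

/-- Partial derivative in the `i`-th coordinate direction. -/
def pd {n : ℕ} (i : Fin n) (F : (Fin n → ℝ) → ℂ) : (Fin n → ℝ) → ℂ :=
  fun x => fderiv ℝ F x (Pi.single i 1)

/-- Multi-index derivative `∂^α`. -/
def md {n : ℕ} (α : Fin n → ℕ) (F : (Fin n → ℝ) → ℂ) : (Fin n → ℝ) → ℂ :=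
  (((List.finRange n).map fun i => (pd i)^[α i]).foldr (· ∘ ·) id) F

/-- Mixed derivative `∂_x^β ∂_ξ^α σ`. -/
def mixedD {n : ℕ} (β α : Fin n → ℕ) (σ : (Fin n → ℝ) → (Fin n → ℝ) → ℂ) :
    (Fin n → ℝ) → (Fin n → ℝ) → ℂ :=
  fun x ξ => md β (fun x' => md α (fun ξ' => σ x' ξ') ξ) x

/-- The weight `1 + |ξ|²` (Euclidean norm squared). -/
def wt {n : ℕ} (ξ : Fin n → ℝ) : ℝ := 1 + ∑ i, ξ i ^ 2

/-- Length `|α|` of a multi-index, as a real number. -/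
def mOrd {n : ℕ} (α : Fin n → ℕ) : ℝ := ∑ i, (α i : ℝ)

/-- The Hörmander class `S^m_{ρ,δ}(ℝⁿ)`. -/
def SymbolClass {n : ℕ} (m ρ δ : ℝ) (σ : (Fin n → ℝ) → (Fin n → ℝ) → ℂ) : Prop :=
  (ContDiff ℝ (⊤ : ℕ∞) fun p : (Fin n → ℝ) × (Fin n → ℝ) => σ p.1 p.2) ∧
  ∀ α β : Fin n → ℕ, ∃ C > 0, ∀ x ξ,
    ‖mixedD β α σ x ξ‖ ≤ C * wt ξ ^ ((m - ρ * mOrd α + δ * mOrd β) / 2)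

/-- The seminorm `‖σ‖_{S^m_{ρ,δ},α,β}`. -/
def hSem {n : ℕ} (m ρ δ : ℝ) (α β : Fin n → ℕ)
    (σ : (Fin n → ℝ) → (Fin n → ℝ) → ℂ) : ℝ :=
  ⨆ p : (Fin n → ℝ) × (Fin n → ℝ),
    wt p.2 ^ (-(m - ρ * mOrd α + δ * mOrd β) / 2) * ‖mixedD β α σ p.1 p.2‖

/-- Squared Sobolev norm `‖f‖²_{H^s}`. -/
def sobSq {n : ℕ} (s : ℝ) (f : (Fin n → ℝ) → ℂ) : ℝ :=
  ∫ ξ, wt ξ ^ s * ‖FT f ξ‖ ^ 2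

end

/-!
Inserting Fourier inversion into the Bargmann transform shows that the Wick operator with symbol
`σ` and window `a` is the Kohn–Nirenberg operator whose symbol at `(x, ξ)` is the average of
`σ (x + z) (ξ + ζ)` over all phase-space translations `(z, ζ)`, weighted by
`K_a(z, ζ) = e^{-2πi z·ζ} 𝓕a(ζ) conj(a(-z))`. If the frequency translation `ζ` is dropped, the
`ζ`-integral of `K_a` is evaluated by Fourier inversion and the average becomes `σ ∗ |a|²`.
The error made by dropping it costs, by the mean value inequality, one `ξ`-derivative of `σ`, and
Peetre's inequality moves the weight from `ξ + ζ` back to `ξ` at the price of a power of `ζ`, which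
the rapidly decreasing kernel absorbs. The same estimate applies to all derivatives of the error,
which therefore has order `m - ρ ≤ m - (ρ - δ)`.
-/

open scoped ContDiff

section DirectionalDerivative

variable {E E' G : Type*} [NormedAddCommGroup E] [NormedSpace ℝ E]
  [NormedAddCommGroup E'] [NormedSpace ℝ E'] [NormedAddCommGroup G] [NormedSpace ℝ G]

/-- The directional derivative `∂_v F`, as an operator on functions. -/
noncomputable def dirDeriv (v : E) (F : E → G) : E → G := fun p => fderiv ℝ F p v

/-- The iterated directional derivative `∂_{v₁} ⋯ ∂_{vₖ} F` along a list `[v₁, …, vₖ]`; the last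
entry of the list is differentiated first. -/
noncomputable def iteratedDirDeriv (l : List E) (F : E → G) : E → G := l.foldr dirDeriv F

lemma iteratedDirDeriv_cons (v : E) (l : List E) (F : E → G) :
    iteratedDirDeriv (v :: l) F = dirDeriv v (iteratedDirDeriv l F) := rfl

lemma iteratedDirDeriv_append (l l' : List E) (F : E → G) :
    iteratedDirDeriv (l ++ l') F = iteratedDirDeriv l (iteratedDirDeriv l' F) :=
  List.foldr_append

lemma iteratedDirDeriv_replicate (k : ℕ) (v : E) (F : E → G) :
    iteratedDirDeriv (List.replicate k v) F = (dirDeriv v)^[k] F := by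
  induction k with
  | zero => rfl
  | succ k ih =>
    rw [List.replicate_succ, iteratedDirDeriv_cons, ih, Function.iterate_succ_apply']

lemma contDiff_dirDeriv (v : E) {F : E → G} (hF : ContDiff ℝ ∞ F) :
    ContDiff ℝ ∞ (dirDeriv v F) :=
  (hF.fderiv_right (by simp)).clm_apply contDiff_const

lemma contDiff_iteratedDirDeriv (l : List E) {F : E → G} (hF : ContDiff ℝ ∞ F) :
    ContDiff ℝ ∞ (iteratedDirDeriv l F) := by
  induction l with
  | nil => exact hF
  | cons v l ih => exact contDiff_dirDeriv v ih

lemma dirDeriv_comm (v w : E) {F : E → G} (hF : ContDiff ℝ ∞ F) :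
    dirDeriv v (dirDeriv w F) = dirDeriv w (dirDeriv v F) := by
  have hF' : Differentiable ℝ (fderiv ℝ F) :=
    (hF.fderiv_right (m := ∞) (by simp)).differentiable (by simp)
  have second_deriv (u u' : E) (p : E) :
      dirDeriv u (dirDeriv u' F) p = fderiv ℝ (fderiv ℝ F) p u u' := by
    change fderiv ℝ (fun p => fderiv ℝ F p u') p u = _
    rw [fderiv_clm_apply (hF' p) (differentiableAt_const u')]
    simp
  funext p
  rw [second_deriv, second_deriv]
  refine (hF.contDiffAt.isSymmSndFDerivAt ?_).eq v w
  simpa using WithTop.coe_le_coe.2 (le_top : (2 : ℕ∞) ≤ ⊤)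

lemma iteratedDirDeriv_perm {l l' : List E} (h : l.Perm l') {F : E → G} (hF : ContDiff ℝ ∞ F) :
    iteratedDirDeriv l F = iteratedDirDeriv l' F := by
  induction h with
  | nil => rfl
  | cons v _ ih => rw [iteratedDirDeriv_cons, iteratedDirDeriv_cons, ih]
  | swap v w l => exact dirDeriv_comm w v (contDiff_iteratedDirDeriv l hF)
  | trans _ _ ih ih' => exact ih.trans ih'

lemma iteratedDirDeriv_sub (l : List E) {F H : E → G} (hF : ContDiff ℝ ∞ F)
    (hH : ContDiff ℝ ∞ H) :
    iteratedDirDeriv l (F - H) = iteratedDirDeriv l F - iteratedDirDeriv l H := by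
  induction l with
  | nil => rfl
  | cons v l ih =>
    funext p
    rw [iteratedDirDeriv_cons, ih, dirDeriv,
      fderiv_sub ((contDiff_iteratedDirDeriv l hF).differentiable (by simp) p)
        ((contDiff_iteratedDirDeriv l hH).differentiable (by simp) p)]
    rfl

lemma iteratedDirDeriv_comp {g : E → E'} {A : E →L[ℝ] E'} (hg : ∀ x, HasFDerivAt g A x)
    (l : List E) {F : E' → G} (hF : ContDiff ℝ ∞ F) :
    iteratedDirDeriv l (F ∘ g) = iteratedDirDeriv (l.map A) F ∘ g := by
  induction l with
  | nil => rfl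
  | cons v l ih =>
    funext x
    have hlF : DifferentiableAt ℝ (iteratedDirDeriv (l.map A) F) (g x) :=
      (contDiff_iteratedDirDeriv _ hF).differentiable (by simp) _
    rw [iteratedDirDeriv_cons, ih, dirDeriv, (hlF.hasFDerivAt.comp x (hg x)).fderiv]
    rfl

lemma fderiv_eq_sum_dirDeriv {ι : Type*} [Fintype ι] [FiniteDimensional ℝ E]
    (B : Module.Basis ι ℝ E) (F : E → G) (p : E) :
    fderiv ℝ F p = ∑ i, (LinearMap.toContinuousLinearMap (B.coord i)).smulRight
      (dirDeriv (B i) F p) := by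
  ext v
  conv_lhs => rw [← B.sum_repr v, map_sum]
  simp [dirDeriv]

end DirectionalDerivative

section TemperateGrowth

variable {E G : Type*} [NormedAddCommGroup E] [NormedSpace ℝ E]
  [NormedAddCommGroup G] [NormedSpace ℝ G]

lemma hasTemperateGrowth_fderiv {F : E → G} (hF : F.HasTemperateGrowth) :
    (fderiv ℝ F).HasTemperateGrowth := by
  refine ⟨hF.1.fderiv_right (by simp), fun N => ?_⟩
  obtain ⟨k, C, hFN⟩ := hF.2 (N + 1)
  exact ⟨k, C, fun x => norm_iteratedFDeriv_fderiv.trans_le (hFN x)⟩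

lemma hasTemperateGrowth_dirDeriv (v : E) {F : E → G} (hF : F.HasTemperateGrowth) :
    (dirDeriv v F).HasTemperateGrowth :=
  (ContinuousLinearMap.apply ℝ G v).hasTemperateGrowth.comp (hasTemperateGrowth_fderiv hF)

lemma hasTemperateGrowth_iteratedDirDeriv (l : List E) {F : E → G} (hF : F.HasTemperateGrowth) :
    (iteratedDirDeriv l F).HasTemperateGrowth := by
  induction l with
  | nil => exact hF
  | cons v l ih => exact hasTemperateGrowth_dirDeriv v ih

lemma exists_norm_le_of_hasTemperateGrowth {F : E → G} (hF : F.HasTemperateGrowth) :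
    ∃ (k : ℕ) (C : ℝ), ∀ x, ‖F x‖ ≤ C * (1 + ‖x‖) ^ k := by
  simpa only [norm_iteratedFDeriv_zero] using hF.2 0

lemma exists_norm_iteratedFDeriv_le_of_basis {ι : Type*} [FiniteDimensional ℝ E]
    (B : Module.Basis ι ℝ E) (N : ℕ) {F : E → G} (hF : ContDiff ℝ ∞ F)
    (hbound : ∀ l : List ι, ∃ (k : ℕ) (C : ℝ), ∀ x,
      ‖iteratedDirDeriv (l.map B) F x‖ ≤ C * (1 + ‖x‖) ^ k) :
    ∃ (k : ℕ) (C : ℝ), ∀ x, ‖iteratedFDeriv ℝ N F x‖ ≤ C * (1 + ‖x‖) ^ k := by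
  have := Module.Finite.finite_basis B
  cases nonempty_fintype ι
  induction N generalizing F with
  | zero =>
    simp only [norm_iteratedFDeriv_zero]
    exact hbound []
  | succ N ih =>
    let L (i : ι) : G →L[ℝ] E →L[ℝ] G :=
      ContinuousLinearMap.smulRightL ℝ E G (LinearMap.toContinuousLinearMap (B.coord i))
    have fderiv_eq : fderiv ℝ F = ∑ i, L i ∘ dirDeriv (B i) F := by
      funext x
      rw [fderiv_eq_sum_dirDeriv B, Finset.sum_apply]
      rfl
    have hsmooth (i : ι) : ContDiff ℝ N (dirDeriv (B i) F) :=
      (contDiff_dirDeriv (B i) hF).of_le (mod_cast le_top)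
    have hbound_dirDeriv (i : ι) (l : List ι) : ∃ (k : ℕ) (C : ℝ), ∀ x,
        ‖iteratedDirDeriv (l.map B) (dirDeriv (B i) F) x‖ ≤ C * (1 + ‖x‖) ^ k := by
      have := hbound (l ++ [i])
      rwa [List.map_append, iteratedDirDeriv_append] at this
    choose k C hC using fun i => ih (contDiff_dirDeriv (B i) hF) (hbound_dirDeriv i)
    refine ⟨∑ i, k i, ∑ i, ‖L i‖ * |C i|, fun x => ?_⟩
    rw [← norm_iteratedFDeriv_fderiv, fderiv_eq,
      iteratedFDeriv_sum_apply fun i _ => ((L i).contDiff.comp (hsmooth i)).contDiffAt,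
      Finset.sum_mul]
    refine norm_sum_le_of_le _ fun i _ => ?_
    calc ‖iteratedFDeriv ℝ N (L i ∘ dirDeriv (B i) F) x‖
        ≤ ‖L i‖ * ‖iteratedFDeriv ℝ N (dirDeriv (B i) F) x‖ :=
          (L i).norm_iteratedFDeriv_comp_left (hsmooth i).contDiffAt le_rfl
      _ ≤ ‖L i‖ * (C i * (1 + ‖x‖) ^ k i) := by gcongr; exact hC i x
      _ ≤ ‖L i‖ * (|C i| * (1 + ‖x‖) ^ ∑ j, k j) := by
          gcongr
          · exact le_abs_self _
          · linarith [norm_nonneg x]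
          · exact Finset.single_le_sum (fun _ _ => Nat.zero_le _) (Finset.mem_univ i)
      _ = ‖L i‖ * |C i| * (1 + ‖x‖) ^ ∑ j, k j := by ring

lemma hasTemperateGrowth_of_basis {ι : Type*} [FiniteDimensional ℝ E]
    (B : Module.Basis ι ℝ E) {F : E → G} (hF : ContDiff ℝ ∞ F)
    (hbound : ∀ l : List ι, ∃ (k : ℕ) (C : ℝ), ∀ x,
      ‖iteratedDirDeriv (l.map B) F x‖ ≤ C * (1 + ‖x‖) ^ k) :
    F.HasTemperateGrowth :=
  ⟨hF, fun N => exists_norm_iteratedFDeriv_le_of_basis B N hF hbound⟩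

end TemperateGrowth

lemma one_add_norm_add_le {E : Type*} [SeminormedAddGroup E] (p q : E) :
    1 + ‖p + q‖ ≤ (1 + ‖p‖) * (1 + ‖q‖) := by
  nlinarith [norm_add_le p q, mul_nonneg (norm_nonneg p) (norm_nonneg q)]

lemma one_add_norm_clm_le {Ω E : Type*} [SeminormedAddCommGroup Ω] [NormedSpace ℝ Ω]
    [SeminormedAddCommGroup E] [NormedSpace ℝ E] (L : Ω →L[ℝ] E) (q : Ω) :
    1 + ‖L q‖ ≤ (1 + ‖L‖) * (1 + ‖q‖) := by
  nlinarith [L.le_opNorm q, norm_nonneg L, norm_nonneg q]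

section TranslationAverage

variable {E Ω G 𝕜 : Type*} [NormedAddCommGroup E] [NormedSpace ℝ E]
  [NormedAddCommGroup Ω] [NormedSpace ℝ Ω]
  [NormedField 𝕜] [NormedAddCommGroup G] [NormedSpace 𝕜 G]

lemma norm_smul_comp_add_clm_le {K : Ω → 𝕜} {F : E → G} {C : ℝ} {k : ℕ}
    (hbound : ∀ x, ‖F x‖ ≤ C * (1 + ‖x‖) ^ k) (L : Ω →L[ℝ] E) (p : E) (q : Ω) :
    ‖K q • F (p + L q)‖ ≤
      |C| * ((1 + ‖p‖) * (1 + ‖L‖)) ^ k * ((1 + ‖q‖) ^ k * ‖K q‖) := by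
  have hweight : 1 + ‖p + L q‖ ≤ (1 + ‖p‖) * (1 + ‖L‖) * (1 + ‖q‖) :=
    calc 1 + ‖p + L q‖ ≤ (1 + ‖p‖) * (1 + ‖L q‖) := one_add_norm_add_le p (L q)
      _ ≤ (1 + ‖p‖) * ((1 + ‖L‖) * (1 + ‖q‖)) := by gcongr; exact one_add_norm_clm_le L q
      _ = _ := (mul_assoc _ _ _).symm
  calc ‖K q • F (p + L q)‖ = ‖K q‖ * ‖F (p + L q)‖ := norm_smul _ _
    _ ≤ ‖K q‖ * (|C| * (1 + ‖p + L q‖) ^ k) := by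
        gcongr
        exact (hbound _).trans (by gcongr; exact le_abs_self C)
    _ ≤ ‖K q‖ * (|C| * ((1 + ‖p‖) * (1 + ‖L‖) * (1 + ‖q‖)) ^ k) := by gcongr
    _ = |C| * ((1 + ‖p‖) * (1 + ‖L‖)) ^ k * ((1 + ‖q‖) ^ k * ‖K q‖) := by rw [mul_pow]; ring

variable [MeasurableSpace Ω]

/-- `K` is a kernel with finite absolute moments of every order. -/
structure HasFiniteMoments (K : Ω → 𝕜) (μ : Measure Ω) : Prop where
  aestronglyMeasurable : AEStronglyMeasurable K μ
  integrable_pow_mul (N : ℕ) : Integrable (fun q => (1 + ‖q‖) ^ N * ‖K q‖) μ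

variable {K : Ω → 𝕜} {μ : Measure Ω}

lemma integrable_smul_comp_add_clm [BorelSpace Ω] [SecondCountableTopology Ω]
    (hK : HasFiniteMoments K μ) (L : Ω →L[ℝ] E) {F : E → G} (hF : Continuous F)
    {C : ℝ} {k : ℕ} (hbound : ∀ x, ‖F x‖ ≤ C * (1 + ‖x‖) ^ k) (p : E) :
    Integrable (fun q => K q • F (p + L q)) μ :=
  ((hK.integrable_pow_mul k).const_mul _).mono'
    (hK.aestronglyMeasurable.smul (by fun_prop : Continuous _).aestronglyMeasurable)
    (.of_forall fun q => norm_smul_comp_add_clm_le hbound L p q)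

variable [NormedSpace ℝ G]

/-- The average `∫ K(q) F(p + L q) dμ(q)` of the translates of `F` along the linear map `L`,
weighted by `K`. -/
noncomputable def translationAverage (K : Ω → 𝕜) (μ : Measure Ω) (L : Ω →L[ℝ] E) (F : E → G)
    (p : E) : G :=
  ∫ q, K q • F (p + L q) ∂μ

variable [BorelSpace Ω] [SecondCountableTopology Ω]

lemma integrable_smul_comp_add_clm_of_hasTemperateGrowth (hK : HasFiniteMoments K μ)
    (L : Ω →L[ℝ] E) {F : E → G} (hF : F.HasTemperateGrowth) (p : E) :
    Integrable (fun q => K q • F (p + L q)) μ :=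
  have ⟨_, _, hbound⟩ := exists_norm_le_of_hasTemperateGrowth hF
  integrable_smul_comp_add_clm hK L hF.1.continuous hbound p

lemma norm_translationAverage_sub_le (hK : HasFiniteMoments K μ) (L L' : Ω →L[ℝ] E) {F : E → G}
    (hF : F.HasTemperateGrowth) {p : E} {D : ℝ} {N : ℕ}
    (hbound : ∀ q, ‖F (p + L q) - F (p + L' q)‖ ≤ D * (1 + ‖q‖) ^ N) :
    ‖translationAverage K μ L F p - translationAverage K μ L' F p‖ ≤
      D * ∫ q, (1 + ‖q‖) ^ N * ‖K q‖ ∂μ := by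
  rw [translationAverage, translationAverage,
    ← integral_sub (integrable_smul_comp_add_clm_of_hasTemperateGrowth hK L hF p)
      (integrable_smul_comp_add_clm_of_hasTemperateGrowth hK L' hF p), ← integral_const_mul]
  refine norm_integral_le_of_norm_le ((hK.integrable_pow_mul N).const_mul D)
    (.of_forall fun q => ?_)
  rw [← smul_sub, norm_smul]
  calc ‖K q‖ * ‖F (p + L q) - F (p + L' q)‖ ≤ ‖K q‖ * (D * (1 + ‖q‖) ^ N) := by
        gcongr
        exact hbound q
    _ = D * ((1 + ‖q‖) ^ N * ‖K q‖) := by ring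

variable [SMulCommClass ℝ 𝕜 G]

lemma hasFDerivAt_translationAverage (hK : HasFiniteMoments K μ) (L : Ω →L[ℝ] E) {F : E → G}
    (hF : F.HasTemperateGrowth) (p : E) :
    HasFDerivAt (translationAverage K μ L F) (translationAverage K μ L (fderiv ℝ F) p) p := by
  have hF' := hasTemperateGrowth_fderiv hF
  obtain ⟨k, C, hbound⟩ := exists_norm_le_of_hasTemperateGrowth hF'
  refine hasFDerivAt_integral_of_dominated_of_fderiv_le (Metric.ball_mem_nhds p one_pos)
    (bound := fun q =>
      |C| * ((1 + (‖p‖ + 1)) * (1 + ‖L‖)) ^ k * ((1 + ‖q‖) ^ k * ‖K q‖))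
    (.of_forall fun p' =>
      (integrable_smul_comp_add_clm_of_hasTemperateGrowth hK L hF p').aestronglyMeasurable)
    (integrable_smul_comp_add_clm_of_hasTemperateGrowth hK L hF p)
    (integrable_smul_comp_add_clm_of_hasTemperateGrowth hK L hF' p).aestronglyMeasurable
    (.of_forall fun q p' hp' => (norm_smul_comp_add_clm_le hbound L p' q).trans ?_)
    ((hK.integrable_pow_mul k).const_mul _) (.of_forall fun q p' _ => ?_)
  · gcongr
    exact (norm_lt_of_mem_ball hp').le
  · have hFq : HasFDerivAt F (fderiv ℝ F (p' + L q)) (p' + L q) :=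
      (hF.1.differentiable (by simp) _).hasFDerivAt
    exact ((hasFDerivAt_comp_add_right (L q)).2 hFq).const_smul (K q)

lemma dirDeriv_translationAverage (hK : HasFiniteMoments K μ) (L : Ω →L[ℝ] E)
    {F : E → G} (hF : F.HasTemperateGrowth) (v : E) :
    dirDeriv v (translationAverage K μ L F) = translationAverage K μ L (dirDeriv v F) := by
  funext p
  rw [dirDeriv, (hasFDerivAt_translationAverage hK L hF p).fderiv, translationAverage,
    ContinuousLinearMap.integral_apply (integrable_smul_comp_add_clm_of_hasTemperateGrowth hK L
      (hasTemperateGrowth_fderiv hF) p)]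
  rfl

lemma iteratedDirDeriv_translationAverage (hK : HasFiniteMoments K μ)
    (L : Ω →L[ℝ] E) {F : E → G} (hF : F.HasTemperateGrowth) (l : List E) :
    iteratedDirDeriv l (translationAverage K μ L F) =
      translationAverage K μ L (iteratedDirDeriv l F) := by
  induction l with
  | nil => rfl
  | cons v l ih =>
    rw [iteratedDirDeriv_cons, ih,
      dirDeriv_translationAverage hK L (hasTemperateGrowth_iteratedDirDeriv l hF)]
    rfl

lemma contDiff_translationAverage [FiniteDimensional ℝ E]
    (hK : HasFiniteMoments K μ) (L : Ω →L[ℝ] E) {F : E → G} (hF : F.HasTemperateGrowth) :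
    ContDiff ℝ ∞ (translationAverage K μ L F) := by
  have hdiff {F : E → G} (hF : F.HasTemperateGrowth) :
      Differentiable ℝ (translationAverage K μ L F) :=
    fun p => (hasFDerivAt_translationAverage hK L hF p).differentiableAt
  rw [contDiff_infty]
  intro k
  induction k generalizing F with
  | zero => exact contDiff_zero.2 (hdiff hF).continuous
  | succ k ih =>
    refine contDiff_succ_iff_fderiv_apply.2
      ⟨hdiff hF, fun h => absurd h (WithTop.natCast_ne_top k), fun v => ?_⟩
    change ContDiff ℝ k (dirDeriv v (translationAverage K μ L F))
    rw [dirDeriv_translationAverage hK L hF]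
    exact ih (hasTemperateGrowth_dirDeriv v hF)

end TranslationAverage

section Weight

variable {n : ℕ}

lemma one_le_wt (ξ : Fin n → ℝ) : 1 ≤ wt ξ :=
  le_add_of_nonneg_right (Finset.sum_nonneg fun i _ => sq_nonneg (ξ i))

lemma wt_pos (ξ : Fin n → ℝ) : 0 < wt ξ := one_pos.trans_le (one_le_wt ξ)

lemma wt_neg (ξ : Fin n → ℝ) : wt (-ξ) = wt ξ := by simp [wt]

lemma wt_smul_le {c : ℝ} (hc : |c| ≤ 1) (ξ : Fin n → ℝ) : wt (c • ξ) ≤ wt ξ := by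
  simp only [wt, Pi.smul_apply, smul_eq_mul, mul_pow]
  gcongr with i
  exact mul_le_of_le_one_left (sq_nonneg _) ((sq_le_one_iff_abs_le_one c).2 hc)

lemma wt_add_le (ξ ζ : Fin n → ℝ) : wt (ξ + ζ) ≤ 2 * wt ξ * wt ζ := by
  have hsum : ∑ i, (ξ + ζ) i ^ 2 ≤ 2 * (∑ i, ξ i ^ 2 + ∑ i, ζ i ^ 2) := by
    rw [← Finset.sum_add_distrib, Finset.mul_sum]
    exact Finset.sum_le_sum fun i _ => add_sq_le
  have hξ : 0 ≤ ∑ i, ξ i ^ 2 := Finset.sum_nonneg fun i _ => sq_nonneg (ξ i)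
  have hζ : 0 ≤ ∑ i, ζ i ^ 2 := Finset.sum_nonneg fun i _ => sq_nonneg (ζ i)
  unfold wt
  nlinarith [mul_nonneg hξ hζ]

lemma wt_le_pow_norm (ξ : Fin n → ℝ) : wt ξ ≤ (1 + n) * (1 + ‖ξ‖) ^ 2 := by
  have hsum : ∑ i, ξ i ^ 2 ≤ n * ‖ξ‖ ^ 2 := by
    simpa using Finset.sum_le_card_nsmul Finset.univ (fun i => ξ i ^ 2) (‖ξ‖ ^ 2)
      fun i _ => sq_le_sq.2 (by simpa using norm_le_pi_norm ξ i)
  unfold wt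
  nlinarith [norm_nonneg ξ, mul_nonneg n.cast_nonneg (norm_nonneg ξ), n.cast_nonneg (α := ℝ)]

lemma wt_rpow_le_pow_norm (ξ : Fin n → ℝ) (s : ℝ) :
    wt ξ ^ s ≤ (1 + n) ^ ⌈s⌉₊ * (1 + ‖ξ‖) ^ (2 * ⌈s⌉₊) :=
  calc wt ξ ^ s ≤ wt ξ ^ (⌈s⌉₊ : ℝ) :=
        Real.rpow_le_rpow_of_exponent_le (one_le_wt ξ) (Nat.le_ceil s)
    _ = wt ξ ^ ⌈s⌉₊ := Real.rpow_natCast _ _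
    _ ≤ ((1 + n) * (1 + ‖ξ‖) ^ 2) ^ ⌈s⌉₊ := by
        gcongr
        · exact (wt_pos ξ).le
        · exact wt_le_pow_norm ξ
    _ = _ := by rw [mul_pow, pow_mul]

lemma wt_add_rpow_le (s : ℝ) (ξ ζ : Fin n → ℝ) :
    wt (ξ + ζ) ^ s ≤ 2 ^ |s| * wt ξ ^ s * wt ζ ^ |s| := by
  have hξ := wt_pos ξ
  have hζ := wt_pos ζ
  have hadd := wt_pos (ξ + ζ)
  rcases le_total 0 s with hs | hs
  · rw [abs_of_nonneg hs, ← Real.mul_rpow zero_le_two hξ.le,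
      ← Real.mul_rpow (by positivity) hζ.le]
    exact Real.rpow_le_rpow hadd.le (wt_add_le ξ ζ) hs
  · have hwt : wt ξ ≤ 2 * wt ζ * wt (ξ + ζ) := by
      simpa only [wt_neg, add_neg_cancel_right, mul_right_comm] using wt_add_le (ξ + ζ) (-ζ)
    calc wt (ξ + ζ) ^ s
        = (2 * wt ζ) ^ |s| * (2 * wt ζ * wt (ξ + ζ)) ^ s := by
          rw [Real.mul_rpow (by positivity) hadd.le, ← mul_assoc, abs_of_nonpos hs,
            ← Real.rpow_add (by positivity), neg_add_cancel, Real.rpow_zero, one_mul]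
      _ ≤ (2 * wt ζ) ^ |s| * wt ξ ^ s := by
          gcongr ?_ * ?_
          exact Real.rpow_le_rpow_of_nonpos hξ hwt hs
      _ = 2 ^ |s| * wt ξ ^ s * wt ζ ^ |s| := by
          rw [Real.mul_rpow zero_le_two hζ.le]
          ring

end Weight

section MultiIndex

variable {n : ℕ} {ι : Type*}

/-- The list in which the entry `c i` is repeated `α i` times, encoding the monomial `∏ cᵢ^αᵢ` of
directions attached to the multi-index `α`. -/
def multiIndexList (c : Fin n → ι) (α : Fin n → ℕ) : List ι :=
  (List.finRange n).flatMap fun i => List.replicate (α i) (c i)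

lemma map_multiIndexList {ι' : Type*} (g : ι → ι') (c : Fin n → ι) (α : Fin n → ℕ) :
    (multiIndexList c α).map g = multiIndexList (g ∘ c) α := by
  simp [multiIndexList, List.map_flatMap]

lemma countP_multiIndexList (p : ι → Bool) (c : Fin n → ι) (α : Fin n → ℕ) :
    (multiIndexList c α).countP p = ∑ i, if p (c i) then α i else 0 := by
  simp [multiIndexList, List.countP_flatMap, List.countP_replicate, ← List.sum_ofFn,
    List.ofFn_eq_map, Function.comp_def]

lemma md_eq_iteratedDirDeriv (α : Fin n → ℕ) (F : (Fin n → ℝ) → ℂ) :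
    md α F = iteratedDirDeriv (multiIndexList (fun i => Pi.single i 1) α) F := by
  unfold md multiIndexList
  induction List.finRange n with
  | nil => rfl
  | cons i L ih =>
    rw [List.map_cons, List.foldr_cons, Function.comp_apply, ih, List.flatMap_cons,
      iteratedDirDeriv_append, iteratedDirDeriv_replicate]
    rfl

lemma md_comp {E : Type*} [NormedAddCommGroup E] [NormedSpace ℝ E] {g : (Fin n → ℝ) → E}
    {A : (Fin n → ℝ) →L[ℝ] E} (hg : ∀ x, HasFDerivAt g A x) {b : ι → E} {c : Fin n → ι}
    (hA : ∀ i, A (Pi.single i 1) = b (c i)) {F : E → ℂ} (hF : ContDiff ℝ ∞ F) (α : Fin n → ℕ) :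
    md α (F ∘ g) = iteratedDirDeriv ((multiIndexList c α).map b) F ∘ g := by
  rw [md_eq_iteratedDirDeriv, iteratedDirDeriv_comp hg _ hF, map_multiIndexList,
    map_multiIndexList]
  congr 3
  exact funext hA

/-- The list of position and frequency directions of the mixed derivative `∂_x^β ∂_ξ^α`. -/
def mixedList (β α : Fin n → ℕ) : List (Fin n ⊕ Fin n) :=
  multiIndexList Sum.inl β ++ multiIndexList Sum.inr α

lemma countP_isLeft_mixedList (β α : Fin n → ℕ) :
    (mixedList β α).countP Sum.isLeft = ∑ i, β i := by
  simp [mixedList, countP_multiIndexList]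

lemma countP_isRight_mixedList (β α : Fin n → ℕ) :
    (mixedList β α).countP Sum.isRight = ∑ i, α i := by
  simp [mixedList, countP_multiIndexList]

lemma exists_perm_mixedList (l : List (Fin n ⊕ Fin n)) :
    ∃ β α : Fin n → ℕ, l.Perm (mixedList β α) := by
  refine ⟨fun i => l.countP (Sum.inl i = ·), fun i => l.countP (Sum.inr i = ·), ?_⟩
  rw [← Multiset.coe_eq_coe]
  ext d
  rw [Multiset.count, Multiset.coe_countP, Multiset.coe_countP, mixedList, List.countP_append,
    countP_multiIndexList, countP_multiIndexList]
  cases d <;> simp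

end MultiIndex

section Symbol

variable {n : ℕ} {m ρ δ : ℝ}

/-- The coordinate basis of phase space `ℝⁿ × ℝⁿ`: position directions on the left, frequency
directions on the right. -/
noncomputable def phaseBasis (n : ℕ) : Module.Basis (Fin n ⊕ Fin n) ℝ
    ((Fin n → ℝ) × (Fin n → ℝ)) :=
  (Pi.basisFun ℝ (Fin n)).prod (Pi.basisFun ℝ (Fin n))

lemma phaseBasis_inl (i : Fin n) : phaseBasis n (Sum.inl i) = (Pi.single i 1, 0) := by
  simp [phaseBasis]

lemma phaseBasis_inr (i : Fin n) : phaseBasis n (Sum.inr i) = (0, Pi.single i 1) := by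
  simp [phaseBasis]

lemma mixedD_eq_iteratedDirDeriv (β α : Fin n → ℕ) {σ : (Fin n → ℝ) → (Fin n → ℝ) → ℂ}
    (hσ : ContDiff ℝ ∞ (Function.uncurry σ)) (x ξ : Fin n → ℝ) :
    mixedD β α σ x ξ =
      iteratedDirDeriv ((mixedList β α).map (phaseBasis n)) (Function.uncurry σ) (x, ξ) := by
  have frequency_deriv (x' : Fin n → ℝ) :=
    md_comp (hasFDerivAt_prodMk_right (𝕜 := ℝ) x') (fun i => (phaseBasis_inr i).symm) hσ α
  have position_deriv :=
    md_comp (fun x' => hasFDerivAt_prodMk_left (𝕜 := ℝ) x' ξ) (fun i => (phaseBasis_inl i).symm)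
      (contDiff_iteratedDirDeriv ((multiIndexList Sum.inr α).map (phaseBasis n)) hσ) β
  rw [mixedList, List.map_append, iteratedDirDeriv_append]
  calc mixedD β α σ x ξ
      = md β (iteratedDirDeriv ((multiIndexList Sum.inr α).map (phaseBasis n))
          (Function.uncurry σ) ∘ fun x' => (x', ξ)) x :=
        congrArg (fun F => md β F x) (funext fun x' => congrFun (frequency_deriv x') ξ)
    _ = _ := congrFun position_deriv x

/-- The order `m - ρ|α| + δ|β|` of the derivative `∂_x^β ∂_ξ^α` of a symbol in `S^m_{ρ,δ}`, the
derivative being given by its list of position and frequency directions. -/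
def derivOrder (m ρ δ : ℝ) (l : List (Fin n ⊕ Fin n)) : ℝ :=
  m - ρ * l.countP Sum.isRight + δ * l.countP Sum.isLeft

lemma derivOrder_perm {l l' : List (Fin n ⊕ Fin n)} (h : l.Perm l') :
    derivOrder m ρ δ l = derivOrder m ρ δ l' := by
  rw [derivOrder, derivOrder, h.countP_eq, h.countP_eq]

lemma derivOrder_mixedList (β α : Fin n → ℕ) :
    derivOrder m ρ δ (mixedList β α) = m - ρ * mOrd α + δ * mOrd β := by
  simp [derivOrder, countP_isLeft_mixedList, countP_isRight_mixedList, mOrd]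

lemma derivOrder_inr_cons (i : Fin n) (l : List (Fin n ⊕ Fin n)) :
    derivOrder m ρ δ (Sum.inr i :: l) = derivOrder (m - ρ) ρ δ l := by
  rw [derivOrder, derivOrder, List.countP_cons_of_pos rfl, List.countP_cons_of_neg (by simp)]
  push_cast
  ring

lemma symbolClass_iff_iteratedDirDeriv {σ : (Fin n → ℝ) → (Fin n → ℝ) → ℂ} :
    SymbolClass m ρ δ σ ↔ ContDiff ℝ ∞ (Function.uncurry σ) ∧
      ∀ l : List (Fin n ⊕ Fin n), ∃ C > 0, ∀ p : (Fin n → ℝ) × (Fin n → ℝ),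
        ‖iteratedDirDeriv (l.map (phaseBasis n)) (Function.uncurry σ) p‖ ≤
          C * wt p.2 ^ (derivOrder m ρ δ l / 2) := by
  refine and_congr_right fun (hσ : ContDiff ℝ ∞ (Function.uncurry σ)) =>
    ⟨fun h l => ?_, fun h α β => ?_⟩
  · obtain ⟨β, α, hl⟩ := exists_perm_mixedList l
    obtain ⟨C, hC, hbound⟩ := h α β
    refine ⟨C, hC, fun p => ?_⟩
    rw [iteratedDirDeriv_perm (hl.map _) hσ, derivOrder_perm hl, derivOrder_mixedList,
      ← mixedD_eq_iteratedDirDeriv β α hσ]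
    exact hbound p.1 p.2
  · obtain ⟨C, hC, hbound⟩ := h (mixedList β α)
    refine ⟨C, hC, fun x ξ => ?_⟩
    rw [mixedD_eq_iteratedDirDeriv β α hσ, ← derivOrder_mixedList]
    exact hbound (x, ξ)

lemma symbolClass_mono {m m' : ℝ} (hmm' : m ≤ m') {σ : (Fin n → ℝ) → (Fin n → ℝ) → ℂ}
    (hσ : SymbolClass m ρ δ σ) : SymbolClass m' ρ δ σ := by
  refine ⟨hσ.1, fun α β => ?_⟩
  obtain ⟨C, hC, hbound⟩ := hσ.2 α β
  refine ⟨C, hC, fun x ξ => (hbound x ξ).trans ?_⟩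
  gcongr
  exact one_le_wt ξ

lemma hasTemperateGrowth_of_symbolClass {σ : (Fin n → ℝ) → (Fin n → ℝ) → ℂ}
    (hσ : SymbolClass m ρ δ σ) : (Function.uncurry σ).HasTemperateGrowth := by
  obtain ⟨hsmooth, hbound⟩ := symbolClass_iff_iteratedDirDeriv.1 hσ
  refine hasTemperateGrowth_of_basis (phaseBasis n) hsmooth fun l => ?_
  obtain ⟨C, hC, hCl⟩ := hbound l
  set N := ⌈derivOrder m ρ δ l / 2⌉₊
  refine ⟨2 * N, C * (1 + n) ^ N, fun p => (hCl p).trans ?_⟩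
  rw [mul_assoc]
  gcongr
  refine (wt_rpow_le_pow_norm p.2 _).trans ?_
  gcongr
  exact norm_snd_le p

end Symbol

section Remainder

variable {n : ℕ} {m ρ δ : ℝ}

lemma norm_fderiv_le_sum_dirDeriv {G : Type*} [NormedAddCommGroup G] [NormedSpace ℝ G]
    (g : (Fin n → ℝ) → G) (ξ : Fin n → ℝ) :
    ‖fderiv ℝ g ξ‖ ≤ ∑ i, ‖dirDeriv (Pi.single i 1) g ξ‖ := by
  refine ContinuousLinearMap.opNorm_le_bound _ (by positivity) fun ζ => ?_
  rw [fderiv_eq_sum_dirDeriv (Pi.basisFun ℝ (Fin n)), sum_apply, Finset.sum_mul]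
  refine norm_sum_le_of_le _ fun i _ => ?_
  simpa [norm_smul, mul_comm] using
    mul_le_mul_of_nonneg_left (norm_le_pi_norm ζ i) (norm_nonneg (dirDeriv (Pi.single i 1) g ξ))

lemma norm_sub_le_of_norm_dirDeriv_le {G : Type*} [NormedAddCommGroup G] [NormedSpace ℝ G]
    {g : (Fin n → ℝ) → G} (hg : Differentiable ℝ g) {s : ℝ} {C : Fin n → ℝ} (hC : ∀ i, 0 ≤ C i)
    (hbound : ∀ i ξ, ‖dirDeriv (Pi.single i 1) g ξ‖ ≤ C i * wt ξ ^ s) (ξ ζ : Fin n → ℝ) :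
    ‖g (ξ + ζ) - g ξ‖ ≤ (∑ i, C i) * (2 ^ |s| * wt ξ ^ s * wt ζ ^ |s|) * ‖ζ‖ := by
  have hsum : 0 ≤ ∑ i, C i := Finset.sum_nonneg fun i _ => hC i
  have hfderiv : ∀ η ∈ segment ℝ ξ (ξ + ζ),
      ‖fderiv ℝ g η‖ ≤ (∑ i, C i) * (2 ^ |s| * wt ξ ^ s * wt ζ ^ |s|) := by
    rw [segment_eq_image']
    rintro _ ⟨t, ht, rfl⟩
    simp only [add_sub_cancel_left]
    have hsegment : wt (t • ζ) ≤ wt ζ := wt_smul_le (abs_le.2 ⟨by linarith [ht.1], ht.2⟩) ζ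
    have hξ := wt_pos ξ
    have htζ := wt_pos (t • ζ)
    calc ‖fderiv ℝ g (ξ + t • ζ)‖
        ≤ ∑ i, ‖dirDeriv (Pi.single i 1) g (ξ + t • ζ)‖ := norm_fderiv_le_sum_dirDeriv g _
      _ ≤ ∑ i, C i * wt (ξ + t • ζ) ^ s := Finset.sum_le_sum fun i _ => hbound i _
      _ = (∑ i, C i) * wt (ξ + t • ζ) ^ s := (Finset.sum_mul ..).symm
      _ ≤ (∑ i, C i) * (2 ^ |s| * wt ξ ^ s * wt (t • ζ) ^ |s|) := by
          gcongr
          exact wt_add_rpow_le s ξ (t • ζ)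
      _ ≤ (∑ i, C i) * (2 ^ |s| * wt ξ ^ s * wt ζ ^ |s|) := by gcongr
  simpa using (convex_segment ξ (ξ + ζ)).norm_image_sub_le_of_norm_fderiv_le
    (fun η _ => hg η) hfderiv (left_mem_segment ℝ _ _) (right_mem_segment ℝ _ _)

lemma exists_norm_sub_le_of_symbolClass {σ : (Fin n → ℝ) → (Fin n → ℝ) → ℂ}
    (hσ : SymbolClass m ρ δ σ) (l : List (Fin n ⊕ Fin n)) :
    ∃ (D : ℝ) (N : ℕ), 0 ≤ D ∧ ∀ x ξ ζ,
      ‖iteratedDirDeriv (l.map (phaseBasis n)) (Function.uncurry σ) (x, ξ + ζ) -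
          iteratedDirDeriv (l.map (phaseBasis n)) (Function.uncurry σ) (x, ξ)‖ ≤
        D * wt ξ ^ (derivOrder (m - ρ) ρ δ l / 2) * (1 + ‖ζ‖) ^ N := by
  obtain ⟨hsmooth, hbound⟩ := symbolClass_iff_iteratedDirDeriv.1 hσ
  set F := iteratedDirDeriv (l.map (phaseBasis n)) (Function.uncurry σ)
  set s := derivOrder (m - ρ) ρ δ l / 2
  have hF : Differentiable ℝ F :=
    (contDiff_iteratedDirDeriv _ hsmooth).differentiable (by simp)
  choose C hC hbound using fun i => hbound (Sum.inr i :: l)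
  have hsum : 0 ≤ ∑ i, C i := Finset.sum_nonneg fun i _ => (hC i).le
  have hslice (x : Fin n → ℝ) (i : Fin n) (ξ : Fin n → ℝ) :
      ‖dirDeriv (Pi.single i 1) (fun ξ => F (x, ξ)) ξ‖ ≤ C i * wt ξ ^ s := by
    have hderiv : HasFDerivAt (fun ξ => F (x, ξ)) _ ξ :=
      (hF (x, ξ)).hasFDerivAt.comp ξ (hasFDerivAt_prodMk_right x ξ)
    have h := hbound i (x, ξ)
    rw [derivOrder_inr_cons, List.map_cons, iteratedDirDeriv_cons, phaseBasis_inr] at h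
    rwa [dirDeriv, hderiv.fderiv]
  refine ⟨(∑ i, C i) * 2 ^ |s| * (1 + n) ^ ⌈|s|⌉₊, 2 * ⌈|s|⌉₊ + 1, by positivity,
    fun x ξ ζ => ?_⟩
  have hξ := wt_pos ξ
  calc ‖F (x, ξ + ζ) - F (x, ξ)‖
      ≤ (∑ i, C i) * (2 ^ |s| * wt ξ ^ s * wt ζ ^ |s|) * ‖ζ‖ :=
        norm_sub_le_of_norm_dirDeriv_le (by fun_prop) (fun i => (hC i).le) (hslice x) ξ ζ
    _ ≤ (∑ i, C i) * (2 ^ |s| * wt ξ ^ s * ((1 + n) ^ ⌈|s|⌉₊ * (1 + ‖ζ‖) ^ (2 * ⌈|s|⌉₊))) *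
          (1 + ‖ζ‖) := by
        gcongr
        · exact wt_rpow_le_pow_norm ζ |s|
        · linarith
    _ = _ := by rw [pow_succ]; ring

/-- The projection `(z, ζ) ↦ (z, 0)` of phase space; averaging along it translates the position
variable only. -/
noncomputable def positionProj (n : ℕ) :
    (Fin n → ℝ) × (Fin n → ℝ) →L[ℝ] (Fin n → ℝ) × (Fin n → ℝ) :=
  .comp (.inl ℝ _ _) (.fst ℝ _ _)

lemma positionProj_apply (q : (Fin n → ℝ) × (Fin n → ℝ)) : positionProj n q = (q.1, 0) := rfl

theorem symbolClass_translationAverage_sub {K : (Fin n → ℝ) × (Fin n → ℝ) → ℂ}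
    {μ : Measure ((Fin n → ℝ) × (Fin n → ℝ))} (hK : HasFiniteMoments K μ)
    {σ : (Fin n → ℝ) → (Fin n → ℝ) → ℂ} (hσ : SymbolClass m ρ δ σ) :
    SymbolClass (m - ρ) ρ δ fun x ξ =>
      translationAverage K μ (.id ℝ _) (Function.uncurry σ) (x, ξ) -
        translationAverage K μ (positionProj n) (Function.uncurry σ) (x, ξ) := by
  have hgrowth := hasTemperateGrowth_of_symbolClass hσ
  have hsmooth (L) := contDiff_translationAverage hK L hgrowth
  refine symbolClass_iff_iteratedDirDeriv.2
    ⟨(hsmooth (.id ℝ _)).sub (hsmooth (positionProj n)), fun l => ?_⟩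
  obtain ⟨D, N, hD, hbound⟩ := exists_norm_sub_le_of_symbolClass hσ l
  set I := ∫ q, (1 + ‖q‖) ^ N * ‖K q‖ ∂μ
  have hDI : 0 ≤ D * I := mul_nonneg hD (integral_nonneg fun q => by positivity)
  refine ⟨D * I + 1, add_pos_of_nonneg_of_pos hDI one_pos, fun (x, ξ) => ?_⟩
  have hξ := wt_pos ξ
  have hderiv := iteratedDirDeriv_sub (l.map (phaseBasis n)) (hsmooth (.id ℝ _))
    (hsmooth (positionProj n))
  rw [iteratedDirDeriv_translationAverage hK _ hgrowth,
    iteratedDirDeriv_translationAverage hK _ hgrowth] at hderiv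
  calc _ = _ := congrArg norm (congrFun hderiv (x, ξ))
    _ ≤ D * wt ξ ^ (derivOrder (m - ρ) ρ δ l / 2) * I := by
        refine norm_translationAverage_sub_le hK _ _
          (hasTemperateGrowth_iteratedDirDeriv _ hgrowth) fun (z, ζ) => ?_
        rw [positionProj_apply, ContinuousLinearMap.id_apply, Prod.mk_add_mk, Prod.mk_add_mk,
          add_zero]
        refine (hbound (x + z) ξ ζ).trans ?_
        gcongr
        exact norm_snd_le (z, ζ)
    _ ≤ (D * I + 1) * wt ξ ^ (derivOrder (m - ρ) ρ δ l / 2) := by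
        rw [mul_right_comm, add_mul]
        exact le_add_of_nonneg_right (by positivity)

end Remainder

section Moments

lemma one_add_norm_prod_le {Ω Ω' : Type*} [SeminormedAddCommGroup Ω] [SeminormedAddCommGroup Ω']
    (q : Ω × Ω') : 1 + ‖q‖ ≤ (1 + ‖q.1‖) * (1 + ‖q.2‖) := by
  rw [Prod.norm_def]
  rcases max_cases ‖q.1‖ ‖q.2‖ with ⟨h, _⟩ | ⟨h, _⟩ <;> rw [h] <;>
    nlinarith [norm_nonneg q.1, norm_nonneg q.2]

variable {Ω Ω' 𝕜 : Type*} [NormedAddCommGroup Ω] [MeasurableSpace Ω] [NormedAddCommGroup Ω']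
  [MeasurableSpace Ω'] [NormedField 𝕜] {μ : Measure Ω} {ν : Measure Ω'}

lemma HasFiniteMoments.mono {K K' : Ω → 𝕜} (hK : HasFiniteMoments K μ) [OpensMeasurableSpace Ω]
    (hK' : AEStronglyMeasurable K' μ) (hle : ∀ q, ‖K' q‖ ≤ ‖K q‖) : HasFiniteMoments K' μ where
  aestronglyMeasurable := hK'
  integrable_pow_mul N := by
    have hweight : AEStronglyMeasurable (fun q : Ω => (1 + ‖q‖) ^ N) μ :=
      (by fun_prop : Measurable _).aestronglyMeasurable
    refine (hK.integrable_pow_mul N).mono (hweight.mul hK'.norm) (.of_forall fun q => ?_)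
    simp only [norm_mul, norm_norm]
    gcongr
    exact hle q

lemma HasFiniteMoments.comp_neg [MeasurableNeg Ω] [μ.IsNegInvariant] {K : Ω → 𝕜}
    (hK : HasFiniteMoments K μ) : HasFiniteMoments (fun q => K (-q)) μ where
  aestronglyMeasurable := hK.aestronglyMeasurable.comp_measurePreserving
    (Measure.measurePreserving_neg μ)
  integrable_pow_mul N := by simpa using (hK.integrable_pow_mul N).comp_neg

lemma HasFiniteMoments.mul_prod [OpensMeasurableSpace Ω] [OpensMeasurableSpace Ω']
    [SecondCountableTopology Ω] {K : Ω → 𝕜}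
    {K' : Ω' → 𝕜} (hK : HasFiniteMoments K μ) (hK' : HasFiniteMoments K' ν) :
    HasFiniteMoments (fun q : Ω × Ω' => K q.1 * K' q.2) (μ.prod ν) where
  aestronglyMeasurable := hK.aestronglyMeasurable.comp_fst.mul hK'.aestronglyMeasurable.comp_snd
  integrable_pow_mul N := by
    have hweight : AEStronglyMeasurable (fun q : Ω × Ω' => (1 + ‖q‖) ^ N) (μ.prod ν) :=
      (by fun_prop : Continuous _).aestronglyMeasurable
    have hmul : AEStronglyMeasurable (fun q : Ω × Ω' => K q.1 * K' q.2) (μ.prod ν) :=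
      hK.aestronglyMeasurable.comp_fst.mul hK'.aestronglyMeasurable.comp_snd
    refine ((hK.integrable_pow_mul N).mul_prod (hK'.integrable_pow_mul N)).mono'
      (hweight.mul hmul.norm) (.of_forall fun q => ?_)
    calc ‖(1 + ‖q‖) ^ N * ‖K q.1 * K' q.2‖‖ = (1 + ‖q‖) ^ N * (‖K q.1‖ * ‖K' q.2‖) := by
          rw [Real.norm_of_nonneg (by positivity), norm_mul]
      _ ≤ ((1 + ‖q.1‖) * (1 + ‖q.2‖)) ^ N * (‖K q.1‖ * ‖K' q.2‖) := by
          gcongr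
          exact one_add_norm_prod_le q
      _ = _ := by rw [mul_pow]; ring

lemma hasFiniteMoments_schwartzMap [NormedSpace ℝ Ω] [NormedSpace ℝ 𝕜] [BorelSpace Ω]
    [SecondCountableTopology Ω] [μ.HasTemperateGrowth] (f : SchwartzMap Ω 𝕜) :
    HasFiniteMoments f μ where
  aestronglyMeasurable := f.continuous.aestronglyMeasurable
  integrable_pow_mul N := by
    have hsum : Integrable (fun q => 2 ^ (N - 1) * (‖q‖ ^ 0 * ‖f q‖ + ‖q‖ ^ N * ‖f q‖)) μ :=
      ((f.integrable_pow_mul μ 0).add (f.integrable_pow_mul μ N)).const_mul _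
    refine hsum.mono' ?_ (.of_forall fun q => ?_)
    · have := f.continuous
      exact (by fun_prop : Continuous _).aestronglyMeasurable
    · rw [Real.norm_of_nonneg (by positivity)]
      calc (1 + ‖q‖) ^ N * ‖f q‖ ≤ 2 ^ (N - 1) * (1 ^ N + ‖q‖ ^ N) * ‖f q‖ := by
            gcongr
            exact add_pow_le zero_le_one (norm_nonneg q) N
        _ = _ := by ring

end Moments

section Shear

variable {E V : Type*} [NormedAddCommGroup E] [MeasurableSpace E] [BorelSpace E]
  [SecondCountableTopology E] [MeasurableSpace V]
  {μ : Measure E} [SFinite μ] [μ.IsAddRightInvariant] {ν : Measure V} [SFinite ν]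

lemma integrable_comp_sub_prod {G : Type*} [NormedAddCommGroup G] {Φ : V × E → G}
    (hΦ : Integrable Φ (ν.prod μ)) {c : V → E} (hc : Measurable c) :
    Integrable (fun r => Φ (r.1, r.2 - c r.1)) (ν.prod μ) := by
  have hshear : MeasurePreserving (fun r : V × E => (r.1, r.2 - c r.1)) (ν.prod μ) (ν.prod μ) :=
    (MeasurePreserving.id ν).skew_product (g := fun v p => p - c v) (by fun_prop)
      (.of_forall fun v => map_sub_right_eq_self μ (c v))
  exact hshear.integrable_comp_of_integrable hΦ

lemma integral_mul_translationAverage_comp_add_clm {𝕜 : Type*} [RCLike 𝕜] [NormedSpace ℝ E]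
    [NormedAddCommGroup V] [NormedSpace ℝ V] [BorelSpace V] [SecondCountableTopology V]
    {g : V → 𝕜} {K F : E → 𝕜} (hg : HasFiniteMoments g ν) (hK : HasFiniteMoments K μ)
    (hF : Continuous F) {C : ℝ} {k : ℕ}
    (hbound : ∀ p, ‖F p‖ ≤ C * (1 + ‖p‖) ^ k) (p₀ : E) (A : V →L[ℝ] E) :
    ∫ v, g v * translationAverage K μ (.id ℝ E) F (p₀ + A v) ∂ν =
      ∫ p, (∫ v, g v * K (p - (p₀ + A v)) ∂ν) * F p ∂μ := by
  have hprod := integrable_smul_comp_add_clm (hg.mul_prod hK)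
    (A.comp (.fst ℝ V E) + .snd ℝ V E) hF hbound p₀
  have hsheared : Integrable (Function.uncurry fun v p => g v * K (p - (p₀ + A v)) * F p)
      (ν.prod μ) := by
    have hc : Measurable fun v => p₀ + A v := by fun_prop
    refine (integrable_comp_sub_prod hprod hc).congr (.of_forall fun r => ?_)
    simp [Function.uncurry, ← add_assoc]
  calc ∫ v, g v * translationAverage K μ (.id ℝ E) F (p₀ + A v) ∂ν
      = ∫ v, ∫ p, g v * K (p - (p₀ + A v)) * F p ∂μ ∂ν := by
        congr with v
        rw [← integral_add_right_eq_self _ (p₀ + A v), translationAverage, ← integral_const_mul]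
        simp only [add_sub_cancel_right, ContinuousLinearMap.id_apply, smul_eq_mul, mul_assoc,
          add_comm]
    _ = ∫ p, ∫ v, g v * K (p - (p₀ + A v)) * F p ∂ν ∂μ := integral_integral_swap hsheared
    _ = ∫ p, (∫ v, g v * K (p - (p₀ + A v)) ∂ν) * F p ∂μ := by simp only [integral_mul_const]

end Shear

section Fourier

open scoped FourierTransform

variable {n : ℕ}

lemma expi_eq_fourierChar (t : ℝ) : expi t = 𝐞 t := by
  rw [expi, Real.fourierChar_apply]
  push_cast
  ring_nf

lemma expi_add (s t : ℝ) : expi (s + t) = expi s * expi t := by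
  simp only [expi_eq_fourierChar, AddChar.map_add_eq_mul, Circle.coe_mul]

lemma norm_expi (t : ℝ) : ‖expi t‖ = 1 := by
  rw [expi_eq_fourierChar, Circle.norm_coe]

@[fun_prop]
lemma continuous_expi : Continuous expi := by
  unfold expi
  fun_prop

lemma dotp_eq_dotProduct (x y : Fin n → ℝ) : dotp x y = x ⬝ᵥ y := rfl

@[fun_prop]
lemma continuous_dotp {X : Type*} [TopologicalSpace X] {u v : X → Fin n → ℝ}
    (hu : Continuous u) (hv : Continuous v) : Continuous fun x => dotp (u x) (v x) :=
  hu.dotProduct hv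

lemma inner_toLp_eq_dotp (x y : Fin n → ℝ) :
    inner ℝ (WithLp.toLp 2 x) (WithLp.toLp 2 y) = dotp x y := by
  simp [EuclideanSpace.inner_toLp_toLp, dotp_eq_dotProduct, dotProduct_comm]

lemma integral_euclideanSpace_eq {G : Type*} [NormedAddCommGroup G] [NormedSpace ℝ G]
    (F : EuclideanSpace ℝ (Fin n) → G) : ∫ x, F x = ∫ y : Fin n → ℝ, F (WithLp.toLp 2 y) :=
  ((PiLp.volume_preserving_toLp (Fin n)).integral_comp
    (MeasurableEquiv.toLp 2 (Fin n → ℝ)).measurableEmbedding F).symm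

/-- A Schwartz function on `Fin n → ℝ`, transported to Mathlib's Euclidean space, where the library
Fourier transform lives. -/
noncomputable def toEuclideanSchwartz (a : SchwartzMap (Fin n → ℝ) ℂ) :
    SchwartzMap (EuclideanSpace ℝ (Fin n)) ℂ :=
  SchwartzMap.compCLMOfContinuousLinearEquiv ℂ (EuclideanSpace.equiv (Fin n) ℝ) a

lemma toEuclideanSchwartz_toLp (a : SchwartzMap (Fin n → ℝ) ℂ) (z : Fin n → ℝ) :
    toEuclideanSchwartz a (WithLp.toLp 2 z) = a z := rfl

lemma fourier_toEuclideanSchwartz (a : SchwartzMap (Fin n → ℝ) ℂ) (ξ : Fin n → ℝ) :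
    𝓕 (toEuclideanSchwartz a) (WithLp.toLp 2 ξ) = FT a ξ := by
  rw [SchwartzMap.fourier_coe, Real.fourier_eq, integral_euclideanSpace_eq, FT]
  simp only [inner_toLp_eq_dotp, toEuclideanSchwartz_toLp, Circle.smul_def, smul_eq_mul,
    expi_eq_fourierChar, mul_comm]

/-- The Fourier transform `FT a` of a Schwartz function `a`, as a Schwartz function. -/
noncomputable def fourierSchwartz (a : SchwartzMap (Fin n → ℝ) ℂ) : SchwartzMap (Fin n → ℝ) ℂ :=
  SchwartzMap.compCLMOfContinuousLinearEquiv ℂ (EuclideanSpace.equiv (Fin n) ℝ).symm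
    (𝓕 (toEuclideanSchwartz a))

lemma coe_fourierSchwartz (a : SchwartzMap (Fin n → ℝ) ℂ) : ⇑(fourierSchwartz a) = FT a :=
  funext (fourier_toEuclideanSchwartz a)

lemma continuous_FT (a : SchwartzMap (Fin n → ℝ) ℂ) : Continuous (FT a) :=
  coe_fourierSchwartz a ▸ (fourierSchwartz a).continuous

lemma integrable_FT (a : SchwartzMap (Fin n → ℝ) ℂ) : Integrable (FT a) :=
  coe_fourierSchwartz a ▸ (fourierSchwartz a).integrable

lemma hasFiniteMoments_FT (a : SchwartzMap (Fin n → ℝ) ℂ) : HasFiniteMoments (FT a) volume :=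
  coe_fourierSchwartz a ▸ hasFiniteMoments_schwartzMap (fourierSchwartz a)

lemma integral_expi_mul_FT (a : SchwartzMap (Fin n → ℝ) ℂ) (z : Fin n → ℝ) :
    ∫ ζ, expi (dotp z ζ) * FT a ζ = a z := by
  have hinv : 𝓕⁻ (𝓕 (toEuclideanSchwartz a)) (WithLp.toLp 2 z) = a z := by
    rw [FourierTransform.fourierInv_fourier_eq, toEuclideanSchwartz_toLp]
  rw [SchwartzMap.fourierInv_coe, Real.fourierInv_eq, integral_euclideanSpace_eq] at hinv
  simpa only [real_inner_comm, inner_toLp_eq_dotp, fourier_toEuclideanSchwartz,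
    Circle.smul_def, smul_eq_mul, ← expi_eq_fourierChar] using hinv

lemma integrable_expi_mul_FT_mul {f : SchwartzMap (Fin n → ℝ) ℂ} {g : (Fin n → ℝ) → ℂ}
    (hg : Integrable g) :
    Integrable (Function.uncurry fun w η => expi (dotp w η) * FT f η * g w)
      (volume.prod volume) := by
  have hphase : Continuous fun r : (Fin n → ℝ) × (Fin n → ℝ) => expi (dotp r.1 r.2) := by fun_prop
  refine ((hg.mul_prod (integrable_FT f)).bdd_mul (c := 1) hphase.aestronglyMeasurable
    (.of_forall fun r => (norm_expi _).le)).congr (.of_forall fun r => ?_)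
  simp only [Function.uncurry]
  ring

lemma FT_comp_sub_right (a : (Fin n → ℝ) → ℂ) (x ξ : Fin n → ℝ) :
    FT (fun w => a (w - x)) ξ = expi (-dotp x ξ) * FT a ξ := by
  rw [FT, ← integral_add_right_eq_self _ x, FT, ← integral_const_mul]
  congr with u
  simp only [add_sub_cancel_right, dotp_eq_dotProduct, add_dotProduct, neg_add, expi_add]
  ring

lemma FT_mul (f : SchwartzMap (Fin n → ℝ) ℂ) {g : (Fin n → ℝ) → ℂ} (hg : Integrable g)
    (ξ : Fin n → ℝ) : FT (fun w => f w * g w) ξ = ∫ η, FT f η * FT g (ξ - η) := by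
  have hgξ : Integrable fun w => g w * expi (-dotp w ξ) :=
    hg.mul_bdd (c := 1) (by fun_prop : Continuous _).aestronglyMeasurable
      (.of_forall fun w => (norm_expi _).le)
  calc ∫ w, f w * g w * expi (-dotp w ξ)
      = ∫ w, ∫ η, expi (dotp w η) * FT f η * (g w * expi (-dotp w ξ)) := by
        simp only [integral_mul_const, integral_expi_mul_FT]
        simp only [mul_assoc]
    _ = ∫ η, ∫ w, expi (dotp w η) * FT f η * (g w * expi (-dotp w ξ)) :=
        integral_integral_swap (integrable_expi_mul_FT_mul hgξ)
    _ = ∫ η, FT f η * FT g (ξ - η) := by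
        congr with η
        rw [FT.eq_1 g, ← integral_const_mul]
        congr with w
        have hphase : expi (-dotp w (ξ - η)) = expi (dotp w η) * expi (-dotp w ξ) := by
          simp only [← expi_add, dotp_eq_dotProduct, dotProduct_sub]
          ring_nf
        rw [hphase]
        ring

end Fourier

section Wick

open scoped ComplexConjugate

variable {n : ℕ}

/-- The phase-space kernel `K_a(z, ζ) = e^{-2πi z·ζ} 𝓕a(ζ) conj(a(-z))`: the Kohn–Nirenberg symbol
of the Wick operator with window `a` is the average of its Wick symbol over all phase-space
translates, weighted by `K_a`. -/
noncomputable def wickKernel (a : SchwartzMap (Fin n → ℝ) ℂ)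
    (q : (Fin n → ℝ) × (Fin n → ℝ)) : ℂ :=
  expi (-dotp q.1 q.2) * FT a q.2 * conj (a (-q.1))

lemma hasFiniteMoments_wickKernel (a : SchwartzMap (Fin n → ℝ) ℂ) :
    HasFiniteMoments (wickKernel a) volume := by
  have hprod := (hasFiniteMoments_schwartzMap (μ := volume) a).comp_neg.mul_prod
    (hasFiniteMoments_FT a)
  have hcont : Continuous (wickKernel a) := by
    have hFT := continuous_FT a
    unfold wickKernel
    fun_prop
  refine hprod.mono hcont.aestronglyMeasurable fun q => le_of_eq ?_
  simp only [wickKernel, norm_mul, norm_expi, one_mul, RCLike.norm_conj, mul_comm]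

lemma translationAverage_wickKernel_positionProj (a : SchwartzMap (Fin n → ℝ) ℂ)
    {σ : (Fin n → ℝ) → (Fin n → ℝ) → ℂ} (hσ : (Function.uncurry σ).HasTemperateGrowth)
    (x ξ : Fin n → ℝ) :
    translationAverage (wickKernel a) volume (positionProj n) (Function.uncurry σ) (x, ξ) =
      ∫ z, ((‖a z‖ ^ 2 : ℝ) : ℂ) * σ (x - z) ξ := by
  have hint := integrable_smul_comp_add_clm_of_hasTemperateGrowth (hasFiniteMoments_wickKernel a)
    (positionProj n) hσ (x, ξ)
  rw [translationAverage, Measure.volume_eq_prod, integral_prod _ hint, ← integral_neg_eq_self]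
  congr with z
  calc ∫ ζ, wickKernel a (-z, ζ) • Function.uncurry σ ((x, ξ) + positionProj n (-z, ζ))
      = ∫ ζ, expi (dotp z ζ) * FT a ζ * (conj (a z) * σ (x - z) ξ) := by
        congr with ζ
        simp only [wickKernel, dotp_eq_dotProduct, neg_dotProduct, neg_neg, positionProj_apply,
          Prod.mk_add_mk, add_zero, ← sub_eq_add_neg, Function.uncurry_apply_pair, smul_eq_mul,
          mul_assoc]
    _ = ((‖a z‖ ^ 2 : ℝ) : ℂ) * σ (x - z) ξ := by
        rw [integral_mul_const, integral_expi_mul_FT, ← mul_assoc, Complex.mul_conj,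
          Complex.normSq_eq_norm_sq]

lemma expi_mul_conj_mul_Barg (a f : SchwartzMap (Fin n → ℝ) ℂ) (x y ξ : Fin n → ℝ) :
    expi (dotp y ξ) * conj (a (y - x)) * Barg a f x ξ =
      ∫ η, expi (dotp y η) * FT f η * wickKernel a ((x, ξ) - (y, η)) := by
  have ha : Integrable fun w => a (w - x) := a.integrable.comp_sub_right x
  rw [show Barg a f x ξ = ∫ η, FT f η * FT (fun w => a (w - x)) (ξ - η) from FT_mul f ha ξ,
    ← integral_const_mul]
  congr with η
  have hphase : expi (dotp y ξ) * expi (-dotp x (ξ - η)) =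
      expi (dotp y η) * expi (-dotp (x - y) (ξ - η)) := by
    simp only [← expi_add, dotp_eq_dotProduct, sub_dotProduct, dotProduct_sub]
    ring_nf
  simp only [FT_comp_sub_right, wickKernel, Prod.mk_sub_mk, neg_sub]
  linear_combination (conj (a (y - x)) * FT f η * FT a (ξ - η)) * hphase

lemma hasFiniteMoments_expi_mul_FT (f : SchwartzMap (Fin n → ℝ) ℂ) (y : Fin n → ℝ) :
    HasFiniteMoments (fun η => expi (dotp y η) * FT f η) volume := by
  have hFT := continuous_FT f
  refine (hasFiniteMoments_FT f).mono (by fun_prop : Continuous _).aestronglyMeasurable fun η => ?_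
  rw [norm_mul, norm_expi, one_mul]

theorem WickOp_eq_OpKN_translationAverage (a f : SchwartzMap (Fin n → ℝ) ℂ)
    {σ : (Fin n → ℝ) → (Fin n → ℝ) → ℂ} (hσ : (Function.uncurry σ).HasTemperateGrowth) :
    WickOp a σ f = OpKN (fun x ξ =>
      translationAverage (wickKernel a) volume (.id ℝ _) (Function.uncurry σ) (x, ξ)) f := by
  obtain ⟨k, C, hbound⟩ := exists_norm_le_of_hasTemperateGrowth hσ
  have : (volume : Measure ((Fin n → ℝ) × (Fin n → ℝ))).IsAddRightInvariant :=
    inferInstanceAs (volume.prod volume).IsAddRightInvariant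
  ext y
  calc WickOp a σ f y
      = ∫ p, (∫ η, expi (dotp y η) * FT f η * wickKernel a (p - (y, η))) *
          Function.uncurry σ p := by
        rw [WickOp]
        congr with p
        rw [← expi_mul_conj_mul_Barg, Function.uncurry]
        ring
    _ = ∫ η, expi (dotp y η) * FT f η * translationAverage (wickKernel a) volume (.id ℝ _)
          (Function.uncurry σ) (y, η) := by
        simpa using (integral_mul_translationAverage_comp_add_clm
          (hasFiniteMoments_expi_mul_FT f y) (hasFiniteMoments_wickKernel a) hσ.1.continuous hbound
          (y, 0) (ContinuousLinearMap.inr ℝ (Fin n → ℝ) (Fin n → ℝ))).symm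
    _ = _ := by simp only [OpKN, mul_right_comm]

end Wick

theorem wick_vs_KN_general {n : ℕ} {m ρ δ : ℝ} (a : SchwartzMap (Fin n → ℝ) ℂ)
    {σ : (Fin n → ℝ) → (Fin n → ℝ) → ℂ} (hσ : SymbolClass m ρ δ σ) :
    ∃ τ : (Fin n → ℝ) → (Fin n → ℝ) → ℂ, SymbolClass (m - ρ) ρ δ τ ∧
      ∀ (f : SchwartzMap (Fin n → ℝ) ℂ) (x : Fin n → ℝ),
        WickOp (⇑a) σ (⇑f) x
          = ∫ ξ, expi (dotp x ξ)
              * ((∫ z, ((‖a z‖ ^ 2 : ℝ) : ℂ) * σ (x - z) ξ) + τ x ξ)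
              * FT (⇑f) ξ := by
  have hgrowth := hasTemperateGrowth_of_symbolClass hσ
  refine ⟨_, symbolClass_translationAverage_sub (hasFiniteMoments_wickKernel a) hσ, fun f x => ?_⟩
  simp only [WickOp_eq_OpKN_translationAverage a f hgrowth, OpKN,
    ← translationAverage_wickKernel_positionProj a hgrowth, add_sub_cancel]

/-- `Op^{Wick,a}(σ) − Op^{KN}(σ∗|a|²)` is a Kohn–Nirenberg
operator of order `m − (ρ−δ)`. -/
theorem wick_vs_KN (n : ℕ) (hn : 1 ≤ n)
    (m ρ δ : ℝ) (hm : m ≤ 0) (hρ : ρ ≤ 1) (hδρ : δ ≤ ρ) (hδ0 : 0 ≤ δ) (hδ1 : δ < 1)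
    (a : SchwartzMap (Fin n → ℝ) ℂ) (ha : (∫ y, ‖a y‖ ^ 2) = 1)
    (σ : (Fin n → ℝ) → (Fin n → ℝ) → ℂ) (hσ : SymbolClass m ρ δ σ) :
    ∃ τ : (Fin n → ℝ) → (Fin n → ℝ) → ℂ, SymbolClass (m - (ρ - δ)) ρ δ τ ∧
      ∀ (f : SchwartzMap (Fin n → ℝ) ℂ) (x : Fin n → ℝ),
        WickOp (⇑a) σ (⇑f) x
          = ∫ ξ, expi (dotp x ξ)
              * ((∫ z, ((‖a z‖ ^ 2 : ℝ) : ℂ) * σ (x - z) ξ) + τ x ξ)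
              * FT (⇑f) ξ := by
  obtain ⟨τ, hτ, hWick⟩ := wick_vs_KN_general a hσ
  exact ⟨τ, symbolClass_mono (by linarith) hτ, hWick⟩
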